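/- arXiv:2006.01288 — 3 statements merged into one kernel-verified Lean document; each statement's English description precedes it below -/
import Mathlib

section
/- Let 𝔽_q be a finite field with q elements, let A be an invertible a×a matrix and A' an invertible b×b matrix over 𝔽_q, and suppose the characteristic polynomial of A' is coprime in 𝔽_q[X] to the characteristic polynomial of A⁻¹. Let t be the (a+b)×(a+b) block-diagonal matrix with diagonal blocks A and A'. Then F(t) = F(A) · F(A'). -/
/-!
An off-diagonal block `X` of a matrix `B` with `t * B * tᵀ = B` satisfies `A * X * A'ᵀ = X`, so `X`
intertwines `A⁻¹` and `A'ᵀ`, hence also `p(A⁻¹)` and `p(A'ᵀ)` for every polynomial `p`. The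
characteristic polynomials of `A⁻¹` and `A'ᵀ` annihilate these matrices and are coprime, which
forces `X = 0`. So `B` is block diagonal, and its two diagonal blocks vary independently.
-/

open Matrix Polynomial
open scoped Cardinal

section Intertwining

variable {R m n : Type*} [Fintype m] [DecidableEq m] [Fintype n] [DecidableEq n]

theorem pow_mul_eq_mul_pow_of_mul_eq_mul [Semiring R] {M : Matrix m m R} {N : Matrix n n R}
    {X : Matrix m n R} (h : M * X = X * N) (k : ℕ) : M ^ k * X = X * N ^ k := by
  induction k with
  | zero => simp
  | succ k ih =>
    calc M ^ (k + 1) * X = M ^ k * (M * X) := by rw [pow_succ, Matrix.mul_assoc]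
      _ = M ^ k * X * N := by rw [h, Matrix.mul_assoc]
      _ = X * N ^ (k + 1) := by rw [ih, Matrix.mul_assoc, pow_succ]

theorem aeval_mul_eq_mul_aeval_of_mul_eq_mul [CommSemiring R] {M : Matrix m m R}
    {N : Matrix n n R} {X : Matrix m n R} (h : M * X = X * N) (p : R[X]) :
    aeval M p * X = X * aeval N p := by
  induction p using Polynomial.induction_on' with
  | add p q hp hq => rw [map_add, map_add, Matrix.add_mul, Matrix.mul_add, hp, hq]
  | monomial k c =>
    simp only [aeval_monomial, ← Algebra.smul_def, Matrix.smul_mul, Matrix.mul_smul,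
      pow_mul_eq_mul_pow_of_mul_eq_mul h]

theorem eq_zero_of_mul_eq_mul_of_isCoprime [CommSemiring R] {M : Matrix m m R}
    {N : Matrix n n R} {X : Matrix m n R} {p q : R[X]} (h : M * X = X * N)
    (hp : aeval M p = 0) (hq : aeval N q = 0) (hpq : IsCoprime p q) : X = 0 := by
  obtain ⟨u, v, huv⟩ := hpq
  have hM : aeval M (v * q) = 1 := by
    simpa only [map_add, map_mul, hp, mul_zero, zero_add, map_one] using congrArg (aeval M) huv
  have hN : aeval N (v * q) = 0 := by rw [map_mul, hq, mul_zero]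
  calc X = aeval M (v * q) * X := by rw [hM, Matrix.one_mul]
    _ = X * aeval N (v * q) := aeval_mul_eq_mul_aeval_of_mul_eq_mul h _
    _ = 0 := by rw [hN, Matrix.mul_zero]

theorem eq_zero_of_mul_mul_transpose_eq [CommRing R] {A : Matrix m m R} {A' : Matrix n n R}
    {X : Matrix m n R} (hA : IsUnit A) (hcop : IsCoprime A'.charpoly A⁻¹.charpoly)
    (hX : A * X * A'ᵀ = X) : X = 0 := by
  have hdet : IsUnit A.det := (isUnit_iff_isUnit_det A).1 hA
  have h : A⁻¹ * X = X * A'ᵀ := by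
    calc A⁻¹ * X = A⁻¹ * (A * (X * A'ᵀ)) := by rw [← Matrix.mul_assoc A, hX]
      _ = X * A'ᵀ := nonsing_inv_mul_cancel_left _ _ hdet
  refine eq_zero_of_mul_eq_mul_of_isCoprime h (aeval_self_charpoly _) (aeval_self_charpoly _) ?_
  rw [charpoly_transpose]
  exact hcop.symm

end Intertwining

/-- The set of invertible symmetric matrices fixed by the congruence action `B ↦ A * B * Aᵀ`, i.e.
Gram matrices of symmetric forms on row vectors preserved by `x ↦ x * A`; its cardinality is the
number `F(A)`. -/
def fixedSymmForms {R n : Type*} [CommRing R] [Fintype n] [DecidableEq n] (A : Matrix n n R) :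
    Set (Matrix n n R) :=
  {B | Bᵀ = B ∧ IsUnit B ∧ A * B * Aᵀ = B}

theorem fromBlocks_zero₁₂_zero₂₁_injective {R m n : Type*} [Zero R] :
    Function.Injective (fun P : Matrix m m R × Matrix n n R ↦ fromBlocks P.1 0 0 P.2) := by
  intro P Q h
  obtain ⟨h₁, -, -, h₂⟩ := fromBlocks_inj.1 h
  exact Prod.ext h₁ h₂

section FixedSymmForms

variable {R m n : Type*} [CommRing R] [Fintype m] [DecidableEq m] [Fintype n] [DecidableEq n]

theorem fromBlocks_mem_fixedSymmForms_iff {A P : Matrix m m R} {A' Q : Matrix n n R} :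
    fromBlocks P 0 0 Q ∈ fixedSymmForms (fromBlocks A 0 0 A') ↔
      P ∈ fixedSymmForms A ∧ Q ∈ fixedSymmForms A' := by
  simp only [fixedSymmForms, Set.mem_ofPred_eq, fromBlocks_transpose, fromBlocks_multiply,
    fromBlocks_inj, isUnit_fromBlocks_zero₁₂, transpose_zero, Matrix.zero_mul, Matrix.mul_zero,
    add_zero, zero_add]
  tauto

theorem fixedSymmForms_fromBlocks {A : Matrix m m R} {A' : Matrix n n R} (hA : IsUnit A)
    (hcop : IsCoprime A'.charpoly A⁻¹.charpoly) :
    fixedSymmForms (fromBlocks A 0 0 A') =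
      (fun P : Matrix m m R × Matrix n n R ↦ fromBlocks P.1 0 0 P.2) ''
        fixedSymmForms A ×ˢ fixedSymmForms A' := by
  ext B
  constructor
  · intro hB
    obtain ⟨P, X, Y, Q, rfl⟩ : ∃ P X Y Q, B = fromBlocks P X Y Q :=
      ⟨_, _, _, _, (fromBlocks_toBlocks B).symm⟩
    have hsymm : (fromBlocks P X Y Q)ᵀ = fromBlocks P X Y Q := hB.1
    have hfix : fromBlocks A 0 0 A' * fromBlocks P X Y Q * (fromBlocks A 0 0 A')ᵀ =
        fromBlocks P X Y Q := hB.2.2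
    have hX : X = 0 := by
      refine eq_zero_of_mul_mul_transpose_eq hA hcop ?_
      simpa [fromBlocks_transpose, fromBlocks_multiply] using congrArg toBlocks₁₂ hfix
    have hY : Y = 0 := by
      have hXY : Xᵀ = Y := by simpa [fromBlocks_transpose] using congrArg toBlocks₂₁ hsymm
      rw [← hXY, hX, transpose_zero]
    subst hX hY
    exact ⟨(P, Q), fromBlocks_mem_fixedSymmForms_iff.1 hB, rfl⟩
  · rintro ⟨P, hP, rfl⟩
    exact fromBlocks_mem_fixedSymmForms_iff.2 hP

end FixedSymmForms

universe u v

theorem stmt5_general {R : Type u} {m n : Type v} [CommRing R] [Fintype m] [DecidableEq m]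
    [Fintype n] [DecidableEq n] {A : Matrix m m R} {A' : Matrix n n R} (hA : IsUnit A)
    (hcop : IsCoprime A'.charpoly A⁻¹.charpoly) :
    #(fixedSymmForms (fromBlocks A 0 0 A')) = #(fixedSymmForms A) * #(fixedSymmForms A') := by
  rw [fixedSymmForms_fromBlocks hA hcop, Cardinal.mk_image_eq fromBlocks_zero₁₂_zero₂₁_injective,
    Cardinal.mk_setProd]

/-- Multiplicativity of the counting function `F` on block-diagonal sums whose blocks have
coprime "symmetrized" characteristic polynomials. -/
theorem stmt5 (q a b : ℕ) (F : Type*) [Field F] [Fintype F] (hF : Fintype.card F = q)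
    (A : Matrix (Fin a) (Fin a) F) (hA : IsUnit A)
    (A' : Matrix (Fin b) (Fin b) F) (hA' : IsUnit A')
    (hcop : IsCoprime (Matrix.charpoly A') (Matrix.charpoly A⁻¹)) :
    Nat.card {B : Matrix (Fin a ⊕ Fin b) (Fin a ⊕ Fin b) F //
        B.transpose = B ∧ IsUnit B ∧
        (Matrix.fromBlocks A 0 0 A') * B * (Matrix.fromBlocks A 0 0 A').transpose = B} =
      Nat.card {B : Matrix (Fin a) (Fin a) F //
        B.transpose = B ∧ IsUnit B ∧ A * B * A.transpose = B} *
      Nat.card {B : Matrix (Fin b) (Fin b) F //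
        B.transpose = B ∧ IsUnit B ∧ A' * B * A'.transpose = B} := by
  exact (congrArg Cardinal.toNat (stmt5_general hA hcop)).trans (Cardinal.toNat_mul _ _)
end

section
/- Let q be a prime power and K a finite field with q² elements, with σ : K → K the Frobenius map σ(x) = x^q. Call an m×m matrix B over K Hermitian if σ(B_{ji}) = B_{ij} for all i, j. Then the number of invertible Hermitian m×m matrices over K equals q^{m(m−1)/2} · ∏_{γ=1}^{m} (q^γ + (−1)^γ). -/
/-!
Border a matrix `D` by a corner `a` and a column `C`, so that an invertible Hermitian matrix is a
triple `(a, C, D)`. If `a ≠ 0`, the Schur complement `D - C a⁻¹ Cᴴ` ranges over all invertible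
Hermitian matrices of the smaller size. If `a = 0`, then `C ≠ 0`, and a congruence moves `C` to the
first basis vector; the top left `2 × 2` block is then `[0, 1; 1, d]`, whose inverse `[-d, 1; 1, 0]`
has lower right entry `0`, so its Schur complement is the remaining Hermitian block itself: that
block has to be invertible, and `d` and the rest of the border are arbitrary. With `q` the number of
self-adjoint scalars and `Q` the number of all scalars, the counts `N m` satisfy
`N (m + 2) = (Q ^ (m + 1) - 1) q Q ^ m N m + (q - 1) Q ^ (m + 1) N (m + 1)`,
and for `Q = q ^ 2` this recurrence is solved by the product formula.
-/

theorem natCast_card_sigma_eq_add_mul {α : Type*} [Finite α] {β : α → Type*} [∀ a, Finite (β a)]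
    (a₀ : α) {c : ℕ} (h : ∀ a, a ≠ a₀ → Nat.card (β a) = c) :
    (Nat.card (Σ a, β a) : ℤ) = Nat.card (β a₀) + (Nat.card α - 1) * c := by
  classical
  have := Fintype.ofFinite α
  have hrest : ∑ a ∈ Finset.univ.erase a₀, Nat.card (β a) = (Finset.univ.erase a₀).card * c :=
    Finset.sum_const_nat fun a ha => h a (Finset.ne_of_mem_erase ha)
  rw [Nat.card_sigma, ← Finset.add_sum_erase _ _ (Finset.mem_univ a₀), hrest, Nat.cast_add,
    Nat.cast_mul, Finset.cast_card_erase_of_mem (Finset.mem_univ a₀), Finset.card_univ,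
    ← Nat.card_eq_fintype_card]

theorem natCard_matrix (m n α : Type*) [Finite m] [Finite n] :
    Nat.card (Matrix m n α) = Nat.card α ^ (Nat.card m * Nat.card n) := by
  rw [← Nat.card_prod, ← Nat.card_fun]
  exact Nat.card_congr (Equiv.curry m n α).symm

open Polynomial in
theorem natCard_subtype_pow_eq_self {K : Type*} [Field K] [Finite K] {q n : ℕ}
    (hK : Nat.card K = q ^ n) : Nat.card {x : K // x ^ q = x} = q := by
  have hcard : 1 < q ^ n := hK ▸ Finite.one_lt_card
  have hq : 1 < q := (Nat.one_lt_pow_iff fun hn => by simp [hn] at hcard).1 hcard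
  have hne : (X ^ Nat.card K - X : K[X]) ≠ 0 :=
    FiniteField.X_pow_card_sub_X_ne_zero K Finite.one_lt_card
  have hdvd : (X ^ q - X : K[X]) ∣ X ^ Nat.card K - X := by
    simpa [hK] using dvd_pow_pow_sub_self_of_dvd (r := (X : K[X])) (p := q) (one_dvd n)
  have hsplits : (X ^ q - X : K[X]).Splits := splits_X_pow_nat_card_sub_X.of_dvd hne hdvd
  have hnodup : (X ^ q - X : K[X]).roots.Nodup := by
    have := Fintype.ofFinite K
    refine Multiset.nodup_of_le (roots.le_of_dvd hne hdvd) ?_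
    rw [Nat.card_eq_fintype_card, FiniteField.roots_X_pow_card_sub_X]
    exact Finset.univ.nodup
  have hmem (x : K) : x ∈ (⟨_, hnodup⟩ : Finset K) ↔ x ^ q = x := by
    rw [Finset.mem_mk, mem_roots (ne_zero_of_dvd_ne_zero hne hdvd)]
    simp [sub_eq_zero]
  rw [Nat.subtype_card _ hmem, Finset.card_mk, ← hsplits.natDegree_eq_card_roots,
    FiniteField.X_pow_card_sub_X_natDegree_eq K hq]

/-- The conjugation `x ↦ x ^ q` on a field with `q ^ 2` elements, which makes Mathlib's Hermitian
matrices over this field those of the unitary theory. The prime power `q` is given as `p ^ k`, so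
that the characteristic can be read off from `hK`. -/
abbrev frobeniusStarRing {K : Type*} [Field K] [Fintype K] {p k : ℕ} [Fact p.Prime]
    (hK : Fintype.card K = (p ^ k) ^ 2) : StarRing K where
  star x := x ^ p ^ k
  star_involutive x := by
    change (x ^ p ^ k) ^ p ^ k = x
    rw [← pow_mul, ← sq, ← hK, FiniteField.pow_card]
  star_mul x y := (mul_pow x y _).trans (mul_comm _ _)
  star_add x y :=
    have : CharP K p := charP_of_card_eq_prime_pow (hK.trans (pow_mul p k 2).symm)
    add_pow_char_pow x y p k

theorem eq_pow_choose_two_mul_prod_of_rec {R : Type*} [CommRing R] {q : R} {f : ℕ → R}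
    (h_zero : f 0 = 1) (h_one : f 1 = q - 1)
    (h_rec : ∀ m, f (m + 2) = ((q ^ 2) ^ (m + 1) - 1) * (q * ((q ^ 2) ^ m * f m)) +
      (q - 1) * ((q ^ 2) ^ (m + 1) * f (m + 1))) (m : ℕ) :
    f m = q ^ m.choose 2 * ∏ γ ∈ Finset.range m, (q ^ (γ + 1) + (-1) ^ (γ + 1)) := by
  induction m using Nat.twoStepInduction with
  | zero => simp [h_zero]
  | one => simp [h_one, sub_eq_add_neg]
  | more m ih ih' =>
    have hchoose (j : ℕ) : (j + 1).choose 2 = j.choose 2 + j := by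
      rw [Nat.choose_succ_succ', Nat.choose_one_right, add_comm]
    have hsign : ((-1 : R) ^ m) ^ 2 = 1 := by rw [← pow_mul, pow_mul', neg_one_sq, one_pow]
    rw [h_rec, ih, ih', hchoose (m + 1), hchoose m]
    simp only [Finset.prod_range_succ]
    linear_combination (q ^ m.choose 2 * q ^ (2 * m + 1) *
      ∏ γ ∈ Finset.range m, (q ^ (γ + 1) + (-1) ^ (γ + 1))) * hsign

section InvertibleHermitian

open Matrix

theorem exists_isUnit_col_eq {n K : Type*} [Fintype n] [DecidableEq n] [Field K]
    {v : n → K} (hv : v ≠ 0) (j : n) :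
    ∃ g : Matrix n n K, IsUnit g ∧ g.col j = v := by
  obtain ⟨i, hi⟩ := Function.ne_iff.1 hv
  refine ⟨((1 : Matrix n n K).updateCol i v).submatrix (Equiv.refl n) (Equiv.swap i j), ?_, ?_⟩
  · rw [isUnit_submatrix_equiv, isUnit_iff_isUnit_det, ← cramer_apply]
    simpa using hi
  · ext x
    simp

theorem isUnit_fromBlocks_mul_iff {m n R : Type*} [Fintype m] [DecidableEq m] [Fintype n]
    [DecidableEq n] [CommRing R] {g h : Matrix n n R} (hg : IsUnit g) (hh : IsUnit h)
    (A : Matrix m m R) (B : Matrix m n R) (C : Matrix n m R) (D : Matrix n n R) :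
    IsUnit (fromBlocks A (B * h) (g * C) (g * D * h)) ↔ IsUnit (fromBlocks A B C D) := by
  have hL : IsUnit (fromBlocks (1 : Matrix m m R) 0 0 g) :=
    isUnit_fromBlocks_zero₂₁.2 ⟨isUnit_one, hg⟩
  have hR : IsUnit (fromBlocks (1 : Matrix m m R) 0 0 h) :=
    isUnit_fromBlocks_zero₂₁.2 ⟨isUnit_one, hh⟩
  have hfactor : fromBlocks A (B * h) (g * C) (g * D * h) =
      fromBlocks 1 0 0 g * fromBlocks A B C D * fromBlocks 1 0 0 h := by
    simp [fromBlocks_multiply]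
  rw [hfactor, hR.mul_right_iff, hL.mul_left_iff]

theorem isUnit_fromBlocks_zero_fromRows_iff {m k R : Type*} [Fintype m] [DecidableEq m]
    [Fintype k] [DecidableEq k] [CommRing R] (d : Matrix m m R) (B : Matrix m k R)
    (w : Matrix k m R) (E : Matrix k k R) :
    IsUnit (fromBlocks (0 : Matrix m m R) (fromCols 1 0) (fromRows 1 0) (fromBlocks d B w E)) ↔
      IsUnit E := by
  let corner : Matrix (m ⊕ m) (m ⊕ m) R := fromBlocks 0 1 1 d
  let cornerInv : Matrix (m ⊕ m) (m ⊕ m) R := fromBlocks (-d) 1 1 0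
  let : Invertible corner :=
    ⟨cornerInv, by simp [corner, cornerInv, fromBlocks_multiply],
      by simp [corner, cornerInv, fromBlocks_multiply]⟩
  have hinv : ⅟corner = cornerInv := rfl
  have hregroup :
      fromBlocks (0 : Matrix m m R) (fromCols 1 0) (fromRows 1 0) (fromBlocks d B w E) =
        (fromBlocks corner (fromRows 0 B) (fromCols 0 w) E).submatrix
          (Equiv.sumAssoc m m k).symm (Equiv.sumAssoc m m k).symm := by
    ext (i | i | i) (j | j | j) <;> simp [corner]
  rw [hregroup, isUnit_submatrix_equiv, isUnit_fromBlocks_iff_of_invertible₁₁, hinv]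
  simp [cornerInv, fromCols_mul_fromBlocks, fromCols_mul_fromRows]

/-- The decomposition of a Hermitian block matrix satisfying `P` into its independent blocks: the
upper left one, the lower left one, and the lower right one. -/
def hermitianBlocksEquiv {m n R : Type*} [InvolutiveStar R]
    (P : Matrix (m ⊕ n) (m ⊕ n) R → Prop) :
    {B : Matrix (m ⊕ n) (m ⊕ n) R // B.IsHermitian ∧ P B} ≃
      Σ (A : {A : Matrix m m R // A.IsHermitian}) (C : Matrix n m R),
        {D : Matrix n n R // D.IsHermitian ∧ P (fromBlocks A Cᴴ C D)} where
  toFun B :=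
    have h := isHermitian_fromBlocks_iff.1 ((fromBlocks_toBlocks B.1).symm ▸ B.2.1)
    ⟨⟨B.1.toBlocks₁₁, h.1⟩, B.1.toBlocks₂₁, B.1.toBlocks₂₂, h.2.2.2, by
      simpa only [h.2.2.1, fromBlocks_toBlocks] using B.2.2⟩
  invFun x :=
    ⟨fromBlocks x.1 x.2.1ᴴ x.2.1 x.2.2,
      x.1.2.fromBlocks (conjTranspose_conjTranspose _) x.2.2.2.1, x.2.2.2.2⟩
  left_inv B := by
    have h := isHermitian_fromBlocks_iff.1 ((fromBlocks_toBlocks B.1).symm ▸ B.2.1)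
    ext1
    simp only [h.2.2.1, fromBlocks_toBlocks]
  right_inv _ := rfl

/-- The invertible Hermitian `n × n` matrices over `R`; when `R` is a field, these are the
Gram matrices of the nondegenerate Hermitian forms on `n → R`. -/
abbrev InvertibleHermitian (n R : Type*) [Fintype n] [DecidableEq n] [CommRing R] [StarRing R] :
    Type _ :=
  {B : Matrix n n R // B.IsHermitian ∧ IsUnit B}

section CommRing

variable {m n k R : Type*} [Fintype m] [DecidableEq m] [Fintype n] [DecidableEq n]
  [Fintype k] [DecidableEq k] [CommRing R] [StarRing R]

/-- The Hermitian lower right blocks that complete the corner `A` and the border `C` to an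
invertible matrix. The upper right block is `Cᴴ`, so for Hermitian `A` the completed matrix is
Hermitian. -/
abbrev HermitianCompletion (A : Matrix m m R) (C : Matrix n m R) : Type _ :=
  {D : Matrix n n R // D.IsHermitian ∧ IsUnit (fromBlocks A Cᴴ C D)}

theorem card_invertibleHermitian_congr (e : m ≃ n) :
    Nat.card (InvertibleHermitian m R) = Nat.card (InvertibleHermitian n R) :=
  Nat.card_congr <| (reindex e e).subtypeEquiv fun _ =>
    and_congr (isHermitian_reindex_iff e).symm (isUnit_submatrix_equiv e.symm e.symm).symm

theorem card_invertibleHermitian_of_isEmpty [IsEmpty n] :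
    Nat.card (InvertibleHermitian n R) = 1 :=
  Nat.card_eq_one_iff_unique.2 ⟨inferInstance, ⟨1, isHermitian_one, isUnit_one⟩⟩

theorem card_hermitianCompletion_of_isUnit {A : Matrix m m R} (hA : A.IsHermitian)
    (hu : IsUnit A) (C : Matrix n m R) :
    Nat.card (HermitianCompletion A C) = Nat.card (InvertibleHermitian n R) := by
  let := hu.invertible
  have hS : (C * ⅟A * Cᴴ).IsHermitian :=
    isHermitian_mul_mul_conjTranspose C (invOf_eq_nonsing_inv A ▸ hA.inv)
  refine Nat.card_congr ((Equiv.subRight (C * ⅟A * Cᴴ)).subtypeEquiv fun D => ?_)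
  rw [isUnit_fromBlocks_iff_of_invertible₁₁]
  refine and_congr_left fun _ => ⟨fun h => h.sub hS, fun h => ?_⟩
  simpa using h.add hS

theorem isEmpty_hermitianCompletion_zero_zero [Nonempty m] [Nontrivial R] :
    IsEmpty (HermitianCompletion (0 : Matrix m m R) (0 : Matrix n m R)) where
  false D := by
    obtain ⟨i⟩ := ‹Nonempty m›
    have hdet := (isUnit_iff_isUnit_det _).1 D.2.2
    rw [det_eq_zero_of_row_eq_zero (.inl i) (by rintro (j | j) <;> simp)] at hdet
    exact not_isUnit_zero hdet

theorem card_hermitianCompletion_mul {g : Matrix n n R} (hg : IsUnit g) (A : Matrix m m R)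
    (C : Matrix n m R) :
    Nat.card (HermitianCompletion A (g * C)) = Nat.card (HermitianCompletion A C) := by
  let congruence : Matrix n n R ≃ Matrix n n R :=
    (Units.mulLeft hg.unit).trans (Units.mulRight hg.star.unit)
  refine (Nat.card_congr (congruence.subtypeEquiv fun D => ?_)).symm
  refine and_congr hg.isSelfAdjoint_conjugate_iff.symm ?_
  rw [conjTranspose_mul]
  exact (isUnit_fromBlocks_mul_iff hg hg.star A Cᴴ C D).symm

theorem card_hermitianCompletion_zero_fromRows :
    Nat.card (HermitianCompletion (0 : Matrix m m R) (fromRows 1 0 : Matrix (m ⊕ k) m R)) =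
      Nat.card {A : Matrix m m R // A.IsHermitian} *
        (Nat.card (Matrix k m R) * Nat.card (InvertibleHermitian k R)) := by
  have hfiber (d : {A : Matrix m m R // A.IsHermitian}) (w : Matrix k m R) (E : Matrix k k R) :
      IsUnit (fromBlocks (0 : Matrix m m R) (fromRows 1 0 : Matrix (m ⊕ k) m R)ᴴ (fromRows 1 0)
        (fromBlocks d.1 wᴴ w E)) ↔ IsUnit E := by
    rw [conjTranspose_fromRows_eq_fromCols_conjTranspose, conjTranspose_one, conjTranspose_zero,
      isUnit_fromBlocks_zero_fromRows_iff]
  rw [← Nat.card_prod, ← Nat.card_prod]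
  exact Nat.card_congr <| (hermitianBlocksEquiv _).trans <|
    (Equiv.sigmaCongrRight fun d => (Equiv.sigmaCongrRight fun w =>
      Equiv.subtypeEquivRight fun E => and_congr_right fun _ => hfiber d w E).trans
        (Equiv.sigmaEquivProd _ _)).trans (Equiv.sigmaEquivProd _ _)

end CommRing

theorem card_hermitian_unit {R : Type*} [AddGroup R] [StarAddMonoid R] :
    Nat.card {A : Matrix Unit Unit R // A.IsHermitian} = Nat.card (selfAdjoint R) :=
  Nat.card_congr <| uniqueEquiv.subtypeEquiv fun A => by
    simp [IsHermitian.ext_iff, selfAdjoint.mem_iff, Unique.forall_iff]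

section Field

variable {n k K : Type*} [Fintype n] [DecidableEq n] [Fintype k] [DecidableEq k] [Field K]
  [StarRing K]

theorem card_hermitianCompletion_zero_of_ne_zero {C : Matrix (Unit ⊕ k) Unit K} (hC : C ≠ 0) :
    Nat.card (HermitianCompletion (0 : Matrix Unit Unit K) C) =
      Nat.card (selfAdjoint K) *
        (Nat.card K ^ Nat.card k * Nat.card (InvertibleHermitian k K)) := by
  have hv : C.col () ≠ 0 := fun h => hC (ext fun i _ => congrFun h i)
  obtain ⟨g, hg, hgC⟩ := exists_isUnit_col_eq hv (.inl ())
  have hCg : C = g * (fromRows 1 0 : Matrix (Unit ⊕ k) Unit K) := by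
    ext i j
    simpa [Matrix.mul_apply] using (congrFun hgC i).symm
  rw [hCg, card_hermitianCompletion_mul hg, card_hermitianCompletion_zero_fromRows,
    card_hermitian_unit, natCard_matrix, Nat.card_unique (α := Unit), mul_one]

variable [Finite K]

theorem natCast_card_invertibleHermitian_unit_sum :
    (Nat.card (InvertibleHermitian (Unit ⊕ n) K) : ℤ) =
      Nat.card (Σ C : Matrix n Unit K, HermitianCompletion (0 : Matrix Unit Unit K) C) +
        (Nat.card (selfAdjoint K) - 1) *
          (Nat.card K ^ Nat.card n * Nat.card (InvertibleHermitian n K)) := by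
  have hfiber (A : {A : Matrix Unit Unit K // A.IsHermitian}) (hA : A ≠ ⟨0, isHermitian_zero⟩) :
      Nat.card (Σ C : Matrix n Unit K, HermitianCompletion A.1 C) =
        Nat.card K ^ Nat.card n * Nat.card (InvertibleHermitian n K) := by
    have hu : IsUnit A.1 := by
      rw [isUnit_iff_isUnit_det, det_unique, isUnit_iff_ne_zero]
      exact fun h => hA (Subtype.ext (ext fun _ _ => h))
    have := Fintype.ofFinite (Matrix n Unit K)
    simp only [Nat.card_sigma, card_hermitianCompletion_of_isUnit A.2 hu, Finset.sum_const,
      Finset.card_univ, smul_eq_mul, ← Nat.card_eq_fintype_card, natCard_matrix,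
      Nat.card_unique (α := Unit), mul_one]
  rw [Nat.card_congr (hermitianBlocksEquiv IsUnit), natCast_card_sigma_eq_add_mul _ hfiber,
    card_hermitian_unit, Nat.cast_mul, Nat.cast_pow]

theorem natCast_card_invertibleHermitian_unit :
    (Nat.card (InvertibleHermitian Unit K) : ℤ) = Nat.card (selfAdjoint K) - 1 := by
  have hempty : IsEmpty (Σ C : Matrix Empty Unit K,
      HermitianCompletion (0 : Matrix Unit Unit K) C) :=
    isEmpty_sigma.2 fun C => Subsingleton.elim 0 C ▸ isEmpty_hermitianCompletion_zero_zero
  rw [← card_invertibleHermitian_congr (Equiv.sumEmpty Unit Empty),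
    natCast_card_invertibleHermitian_unit_sum, Nat.card_of_isEmpty,
    card_invertibleHermitian_of_isEmpty, Nat.card_of_isEmpty (α := Empty)]
  simp

theorem natCast_card_invertibleHermitian_unit_sum_unit_sum :
    (Nat.card (InvertibleHermitian (Unit ⊕ Unit ⊕ k) K) : ℤ) =
      (Nat.card K ^ (Nat.card k + 1) - 1) *
          (Nat.card (selfAdjoint K) *
            (Nat.card K ^ Nat.card k * Nat.card (InvertibleHermitian k K))) +
        (Nat.card (selfAdjoint K) - 1) *
          (Nat.card K ^ (Nat.card k + 1) * Nat.card (InvertibleHermitian (Unit ⊕ k) K)) := by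
  have := isEmpty_hermitianCompletion_zero_zero (m := Unit) (n := Unit ⊕ k) (R := K)
  rw [natCast_card_invertibleHermitian_unit_sum,
    natCast_card_sigma_eq_add_mul 0 fun _ hC => card_hermitianCompletion_zero_of_ne_zero hC,
    Nat.card_of_isEmpty, natCard_matrix, Nat.card_sum, Nat.card_unique (α := Unit), mul_one,
    add_comm 1]
  push_cast
  ring

end Field

theorem natCast_card_invertibleHermitian_fin {K : Type*} [Field K] [StarRing K] [Finite K]
    (hK : Nat.card K = Nat.card (selfAdjoint K) ^ 2) (m : ℕ) :
    (Nat.card (InvertibleHermitian (Fin m) K) : ℤ) =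
      (Nat.card (selfAdjoint K) : ℤ) ^ m.choose 2 *
        ∏ γ ∈ Finset.range m, ((Nat.card (selfAdjoint K) : ℤ) ^ (γ + 1) + (-1) ^ (γ + 1)) := by
  refine eq_pow_choose_two_mul_prod_of_rec
    (f := fun m => (Nat.card (InvertibleHermitian (Fin m) K) : ℤ)) ?_ ?_ (fun m => ?_) m
  · simp only [card_invertibleHermitian_of_isEmpty, Nat.cast_one]
  · rw [card_invertibleHermitian_congr finOneEquiv, natCast_card_invertibleHermitian_unit]
  · have e (j : ℕ) : Fin (j + 1) ≃ Unit ⊕ Fin j := Fintype.equivOfCardEq (by simp [add_comm])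
    rw [card_invertibleHermitian_congr ((e (m + 1)).trans (.sumCongr (.refl Unit) (e m))),
      card_invertibleHermitian_congr (e m),
      natCast_card_invertibleHermitian_unit_sum_unit_sum, Nat.card_fin, hK, Nat.cast_pow]

end InvertibleHermitian

/-- The number of invertible Hermitian `m × m` matrices over the field with `q²` elements
(with conjugation the Frobenius `x ↦ x^q`) equals
`q^(m(m-1)/2) · ∏_{γ=1}^{m} (q^γ + (-1)^γ)`. -/
theorem stmt6 (q m : ℕ) (hq : ∃ p k, Nat.Prime p ∧ 0 < k ∧ q = p ^ k)
    (K : Type*) [Field K] [Fintype K] (hK : Fintype.card K = q ^ 2) (hm : 1 ≤ m) :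
    (Nat.card {B : Matrix (Fin m) (Fin m) K //
        IsUnit B ∧ ∀ i j, (B j i) ^ q = B i j} : ℤ) =
      (q : ℤ) ^ (m * (m - 1) / 2) *
        ∏ γ ∈ Finset.range m, ((q : ℤ) ^ (γ + 1) + (-1) ^ (γ + 1)) := by
  obtain ⟨p, k, hp, -, rfl⟩ := hq
  have : Fact p.Prime := ⟨hp⟩
  let := frobeniusStarRing hK
  have hK' : Nat.card K = (p ^ k) ^ 2 := Nat.card_eq_fintype_card.trans hK
  have hfixed : Nat.card (selfAdjoint K) = p ^ k := natCard_subtype_pow_eq_self hK'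
  have hcount := natCast_card_invertibleHermitian_fin (hK'.trans (by rw [hfixed])) m
  rw [hfixed, Nat.choose_two_right] at hcount
  rw [← hcount]
  congr 1
  refine Nat.card_congr (Equiv.subtypeEquivRight fun B => ?_)
  rw [and_comm, Matrix.IsHermitian.ext_iff]
  rfl
end

section
/- For every n ≥ 0, ∑_{λ ⊢ n} ∏_{d} (m_d(λ) + 1)² equals the number of quadruples (μ₁, μ₂, μ₃, δ) where μ₁, μ₂, μ₃ are partitions, δ is a partition into distinct parts, and |μ₁| + |μ₂| + |μ₃| + |δ| = n. Here the sum is over all partitions λ of n, the product is over the distinct parts d of λ, and m_d(λ) is the multiplicity of d in λ. -/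
/-!
A partition `λ` has `∏ d, (m_d(λ) + 1)` sub-multisets, so the left-hand side counts triples
`(λ, σ, τ)` with `σ, τ ≤ λ`, that is, with `σ ∪ τ ≤ λ`. Put `μ₃ = λ - (σ ∪ τ)`. Of the rest,
`μ₁ = σ ∩ τ`, `δ` is the set of parts which `σ` contains more often than `τ`, and `μ₂` is the
symmetric difference of `σ` and `τ` with one copy of each part in `δ` removed; then
`σ ∪ τ = μ₁ + μ₂ + δ`. The pair `(σ, τ)` can be recovered, because `δ` tells which of the two
contains the copies in `μ₂`.
-/

section Multiset

/-- Triples `(μ, ν, δ)` of multisets in which `δ` is multiplicity-free; they encode pairs of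
multisets. -/
abbrev NodupTriple (α : Type*) : Type _ :=
  {t : Multiset α × Multiset α × Multiset α // t.2.2.Nodup}

variable {α : Type*}

/-- The decompositions `s = μ₁ + μ₂ + μ₃ + δ` of a multiset in which `δ` is multiplicity-free. -/
abbrev NodupSplitting (s : Multiset α) : Type _ :=
  {t : Multiset α × Multiset α × Multiset α × Multiset α //
    t.1 + t.2.1 + t.2.2.1 + t.2.2.2 = s ∧ t.2.2.2.Nodup}

variable [DecidableEq α]

/-- The encoding of a pair of multisets `(σ, τ)` by a triple `(μ, ν, δ)`. An element with
multiplicities `(i, j, 0)` in the triple has multiplicities `(i, i + j)` in the pair, and one with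
multiplicities `(i, j, 1)` in the triple has multiplicities `(i + j + 1, i)` in the pair. -/
def nodupTripleEquivProd : NodupTriple α ≃ Multiset α × Multiset α where
  toFun := fun ⟨(μ, ν, δ), _⟩ ↦ (μ + ν.filter (· ∈ δ) + δ, μ + ν.filter (· ∉ δ))
  invFun := fun (σ, τ) ↦
    ⟨(σ ∩ τ, (τ - σ) + ((σ - τ) - (σ - τ).dedup), (σ - τ).dedup), (σ - τ).nodup_dedup⟩
  left_inv := by
    rintro ⟨⟨μ, ν, δ⟩, hδ : δ.Nodup⟩
    simp only [Subtype.mk.injEq, Prod.mk.injEq, Multiset.ext, ← forall_and]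
    intro a
    have hδa : δ.count a = if a ∈ δ then 1 else 0 := Multiset.count_eq_of_nodup hδ
    simp only [Multiset.count_inter, Multiset.count_add, Multiset.count_sub,
      Multiset.count_filter, Multiset.count_dedup, Multiset.mem_sub]
    split_ifs at * <;> omega
  right_inv := by
    rintro ⟨σ, τ⟩
    simp only [Prod.mk.injEq, Multiset.ext, ← forall_and]
    intro a
    simp only [Multiset.count_inter, Multiset.count_add, Multiset.count_sub,
      Multiset.count_filter, Multiset.count_dedup, Multiset.mem_sub, Multiset.mem_dedup]
    split_ifs <;> omega

theorem union_nodupTripleEquivProd (t : NodupTriple α) :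
    (nodupTripleEquivProd t).1 ∪ (nodupTripleEquivProd t).2 = t.1.1 + t.1.2.1 + t.1.2.2 := by
  obtain ⟨⟨μ, ν, δ⟩, _⟩ := t
  ext a
  by_cases ha : a ∈ δ <;> simp [nodupTripleEquivProd, ha, add_assoc]

/-- Forgetting `μ₃`, which is the difference of `s` and the other components. -/
def nodupSplittingEquivNodupTriple (s : Multiset α) :
    NodupSplitting s ≃ {t : NodupTriple α // t.1.1 + t.1.2.1 + t.1.2.2 ≤ s} where
  toFun := fun ⟨(μ₁, μ₂, μ₃, δ), hs, hδ⟩ ↦ ⟨⟨(μ₁, μ₂, δ), hδ⟩, by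
    rw [← hs, add_right_comm _ μ₃]
    exact Multiset.le_add_right _ _⟩
  invFun := fun ⟨⟨(μ₁, μ₂, δ), hδ⟩, hs⟩ ↦ ⟨(μ₁, μ₂, s - (μ₁ + μ₂ + δ), δ), by
    rw [add_right_comm, add_tsub_cancel_of_le hs], hδ⟩
  left_inv := by
    rintro ⟨⟨μ₁, μ₂, μ₃, δ⟩, rfl, hδ⟩
    simp [add_right_comm _ μ₃]
  right_inv _ := rfl

/-- Splittings of `s` encode the pairs of sub-multisets of `s`. -/
def nodupSplittingEquivIic (s : Multiset α) : NodupSplitting s ≃ Finset.Iic (s, s) :=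
  (nodupSplittingEquivNodupTriple s).trans <| nodupTripleEquivProd.subtypeEquiv fun t ↦ by
    rw [← union_nodupTripleEquivProd, Multiset.union_le_iff, Finset.mem_Iic, Prod.le_def]

theorem natCard_nodupSplitting (s : Multiset α) :
    Nat.card (NodupSplitting s) = ∏ a ∈ s.toFinset, (s.count a + 1) ^ 2 := by
  rw [Nat.card_congr (nodupSplittingEquivIic s), Nat.card_eq_finsetCard, Finset.card_Iic_prod,
    Multiset.card_Iic, Finset.prod_pow, sq]

end Multiset

instance finite_nodupSplitting {α : Type*} (s : Multiset α) : Finite (NodupSplitting s) := by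
  classical exact .of_equiv _ (nodupSplittingEquivIic s).symm

/-- Quadruples `(μ₁, μ₂, μ₃, δ)` of partitions of total weight `n` in which `δ` has distinct
parts. -/
abbrev PartitionQuadruple (n : ℕ) : Type :=
  {t : Multiset ℕ × Multiset ℕ × Multiset ℕ × Multiset ℕ //
    (∀ x ∈ t.1, 0 < x) ∧ (∀ x ∈ t.2.1, 0 < x) ∧ (∀ x ∈ t.2.2.1, 0 < x) ∧
    (∀ x ∈ t.2.2.2, 0 < x) ∧ t.2.2.2.Nodup ∧
    t.1.sum + t.2.1.sum + t.2.2.1.sum + t.2.2.2.sum = n}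

/-- Sorting quadruples by the partition obtained by merging all four components. -/
def partitionQuadrupleEquivSigma (n : ℕ) :
    PartitionQuadruple n ≃ Σ P : Nat.Partition n, NodupSplitting P.parts where
  toFun t :=
    ⟨{  parts := t.1.1 + t.1.2.1 + t.1.2.2.1 + t.1.2.2.2
        parts_pos := by grind
        parts_sum := by simpa only [Multiset.sum_add] using t.2.2.2.2.2.2 },
      t.1, rfl, t.2.2.2.2.2.1⟩
  invFun x := ⟨x.2.1, by
    obtain ⟨P, t, ht, hδ⟩ := x
    have hpos : ∀ x ∈ P.parts, 0 < x := fun _ ↦ P.parts_pos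
    have hsum : P.parts.sum = n := P.parts_sum
    simp only [← ht, Multiset.mem_add, Multiset.sum_add] at hpos hsum
    grind⟩
  left_inv _ := rfl
  right_inv := by
    rintro ⟨⟨parts, hpos, hsum⟩, t, ht, hδ⟩
    dsimp only at ht
    subst ht
    rfl

/-- `∑_{λ ⊢ n} ∏_d (m_d(λ) + 1)²` equals the number of quadruples `(μ₁, μ₂, μ₃, δ)` of
partitions with `δ` having distinct parts and total weight `n`. -/
theorem stmt15 (n : ℕ) :
    ∑ P : Nat.Partition n, ∏ d ∈ P.parts.toFinset, (P.parts.count d + 1) ^ 2 =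
      Nat.card {t : Multiset ℕ × Multiset ℕ × Multiset ℕ × Multiset ℕ //
        (∀ x ∈ t.1, 0 < x) ∧ (∀ x ∈ t.2.1, 0 < x) ∧ (∀ x ∈ t.2.2.1, 0 < x) ∧
        (∀ x ∈ t.2.2.2, 0 < x) ∧ t.2.2.2.Nodup ∧
        t.1.sum + t.2.1.sum + t.2.2.1.sum + t.2.2.2.sum = n} := by
  rw [Nat.card_congr (partitionQuadrupleEquivSigma n), Nat.card_sigma]
  exact Finset.sum_congr rfl fun P _ ↦ (natCard_nodupSplitting P.parts).symm
end
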